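/- Let |p|<1 and let a_1,…,a_n, b_1,…,b_n ∈ ℂ* satisfy ∏_{k=1}^n a_k = ∏_{k=1}^n b_k and a_j/a_k ∉ {p^m : m ∈ ℤ} for all j ≠ k. Then ∑_{k=1}^n [∏_{j=1}^n θ(a_k/b_j;p)] / [∏_{j≠k} θ(a_k/a_j;p)] = 0. -/

import Mathlib

noncomputable def qPochhammerInf (z q : ℂ) : ℂ := ∏' j : ℕ, (1 - z * q ^ j)

noncomputable def theta (z p : ℂ) : ℂ :=
  ∏' j : ℕ, (1 - z * p ^ j) * (1 - p ^ (j + 1) * z⁻¹)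

noncomputable def ellGamma (z p q : ℂ) : ℂ :=
  ∏' jk : ℕ × ℕ,
    (1 - z⁻¹ * p ^ (jk.1 + 1) * q ^ (jk.2 + 1)) / (1 - z * p ^ jk.1 * q ^ jk.2)

/-!
Write `[x, y] = x⁻¹ θ(x / y) θ(x y / c)`, which is antisymmetric in `x` and `y`. For fixed `y` it
is a theta function of degree two in `x`. The relation `f (p z) = K z⁻² f z` determines all Laurent
coefficients of `f` from two consecutive ones, so such functions form a space of dimension at most
two. Hence the matrix `[xᵢ, xⱼ]` on four points is singular, and being antisymmetric it has
vanishing Pfaffian: this is Weierstrass's three-term identity.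

By that identity a combination `∑ A k * [a k, z]` vanishing at two points `u`, `v` with
`[u, v] ≠ 0` vanishes for all `z`. Fix `c = b₁ b₂` and let `b₁ = z`, `b₂ = c / z` vary: the partial
fraction sum is such a combination, and at a node `z = a i` a numerator factor cancels against the
denominators, leaving a sum with one node fewer, which vanishes by induction. Among three nodes,
two have a nonzero bracket.
-/

section LaurentUniqueness

open Complex Metric Set Real

theorem circleMap_add_arg (p c : ℂ) (R t : ℝ) :
    circleMap (p * c) (‖p‖ * R) (t + p.arg) = p * circleMap c R t := by
  nth_rw 4 [← norm_mul_exp_arg_mul_I p]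
  nth_rw 1 [← norm_mul_exp_arg_mul_I p]
  simp only [circleMap, ofReal_add, ofReal_mul, add_mul, Complex.exp_add]
  ring

theorem circleIntegral_comp_mul_left (g : ℂ → ℂ) (p c : ℂ) (R : ℝ) :
    (∮ z in C(c, R), p * g (p * z)) = ∮ z in C(p * c, ‖p‖ * R), g z := by
  let G : ℝ → ℂ := fun t ↦
    deriv (circleMap (p * c) (‖p‖ * R)) t • g (circleMap (p * c) (‖p‖ * R) t)
  have hG : Function.Periodic G (2 * π) := fun t ↦ by
    simp only [G, deriv_circleMap, periodic_circleMap _ _ t]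
  have hrot (t : ℝ) : deriv (circleMap c R) t • (p * g (p * circleMap c R t)) = G (t + p.arg) := by
    have h0 := circleMap_add_arg p 0 R t
    rw [mul_zero] at h0
    simp only [G, deriv_circleMap, circleMap_add_arg, h0, smul_eq_mul]
    ring
  calc (∮ z in C(c, R), p * g (p * z))
      = ∫ t in (0 : ℝ)..2 * π, G (t + p.arg) := by simp only [circleIntegral, hrot]
    _ = ∫ t in p.arg..p.arg + 2 * π, G t := by
      rw [intervalIntegral.integral_comp_add_right, zero_add, add_comm]
    _ = ∮ z in C(p * c, ‖p‖ * R), g z := by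
      rw [hG.intervalIntegral_add_eq p.arg 0, zero_add, circleIntegral]

theorem coe_toCircle_eq_circleMap (t : ℝ) :
    (AddCircle.toCircle (t : AddCircle (2 * π)) : ℂ) = circleMap 0 1 t := by
  rw [AddCircle.toCircle_apply_mk]
  simp [circleMap, Circle.coe_exp]

theorem fourierCoeff_comp_toCircle [Fact (0 < 2 * π)] (f : ℂ → ℂ) (n : ℤ) :
    fourierCoeff (fun x : AddCircle (2 * π) ↦ f x.toCircle) n =
      (2 * π * I)⁻¹ * ∮ z in C(0, 1), z ^ (-n - 1) * f z := by
  have hfourier (t : ℝ) : deriv (circleMap 0 1) t • (circleMap 0 1 t ^ (-n - 1) *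
      f (circleMap 0 1 t)) = I * (fourier (-n) (t : AddCircle (2 * π)) *
        f (AddCircle.toCircle (t : AddCircle (2 * π)))) := by
    rw [fourier_apply, AddCircle.toCircle_zsmul, Circle.coe_zpow, coe_toCircle_eq_circleMap,
      zpow_sub_one₀ (circleMap_ne_center one_ne_zero), deriv_circleMap, smul_eq_mul]
    field [circleMap_ne_center (c := 0) (θ := t) one_ne_zero]
  simp only [fourierCoeff_eq_intervalIntegral _ n 0, circleIntegral, hfourier,
    intervalIntegral.integral_const_mul, smul_eq_mul, zero_add, real_smul]
  push_cast
  field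

theorem eqOn_sphere_zero_of_circleIntegral_zpow_mul_eq_zero {f : ℂ → ℂ}
    (hf : ContinuousOn f (sphere 0 1)) (h : ∀ m : ℤ, (∮ z in C(0, 1), z ^ m * f z) = 0) :
    EqOn f 0 (sphere 0 1) := by
  have : Fact (0 < 2 * π) := ⟨two_pi_pos⟩
  intro w hw
  let F : C(AddCircle (2 * π), ℂ) := ⟨fun x ↦ f x.toCircle, hf.comp_continuous
    (continuous_subtype_val.comp AddCircle.continuous_toCircle) fun x ↦
      mem_sphere_zero_iff_norm.mpr (Circle.norm_coe _)⟩
  have hF (n : ℤ) : fourierCoeff F n = 0 :=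
    (fourierCoeff_comp_toCircle f n).trans (by rw [h, mul_zero])
  have hsum := has_pointwise_sum_fourier_series_of_summable (f := F)
    (summable_zero.congr fun n ↦ (hF n).symm) (w.arg : AddCircle (2 * π))
  simp only [hF, zero_smul] at hsum
  have hw' : circleMap 0 1 w.arg = w := by
    conv_rhs => rw [← norm_mul_exp_arg_mul_I w, mem_sphere_zero_iff_norm.mp hw]
    simp [circleMap]
  rw [← hw', ← coe_toCircle_eq_circleMap]
  exact hsum.unique hasSum_zero

theorem eqOn_compl_zero_of_circleIntegral_zpow_mul_eq_zero {f : ℂ → ℂ}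
    (hf : DifferentiableOn ℂ f {0}ᶜ) (h : ∀ m : ℤ, (∮ z in C(0, 1), z ^ m * f z) = 0) :
    EqOn f 0 {0}ᶜ := by
  have hsphere : EqOn f 0 (sphere 0 1) := eqOn_sphere_zero_of_circleIntegral_zpow_mul_eq_zero
    (hf.continuousOn.mono fun z hz ↦ ne_of_mem_sphere hz one_ne_zero) h
  have hlim : Filter.Tendsto (circleMap 0 1) (nhdsWithin 0 {0}ᶜ) (nhdsWithin 1 {1}ᶜ) := by
    simpa [circleMap] using (hasDerivAt_circleMap 0 1 0).tendsto_nhdsNE (by simp)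
  refine (hf.analyticOnNhd isOpen_compl_singleton).eqOn_of_preconnected_of_frequently_eq
    analyticOnNhd_const
    (isConnected_compl_singleton_of_one_lt_rank (by simp) 0).isPreconnected
    (z₀ := 1) (by simp) (hlim.frequently (Filter.Eventually.frequently ?_))
  exact .of_forall fun t ↦ hsphere (circleMap_mem_sphere 0 zero_le_one t)

theorem circleIntegral_eq_of_differentiableOn_compl {f : ℂ → ℂ} {c : ℂ} {r R : ℝ} (hr : 0 < r)
    (hrR : r ≤ R) (hf : DifferentiableOn ℂ f {c}ᶜ) :
    (∮ z in C(c, R), f z) = ∮ z in C(c, r), f z := by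
  refine circleIntegral_eq_of_differentiable_on_annulus_off_countable hr hrR countable_empty
    (hf.continuousOn.mono ?_) fun z hz ↦ hf.differentiableAt (isOpen_compl_singleton.mem_nhds ?_)
  · rintro z ⟨-, hz⟩ rfl
    exact hz (mem_ball_self hr)
  · rintro rfl
    exact hz.1.2 (mem_closedBall_self hr.le)

end LaurentUniqueness

section ThetaSpace

open Metric Set

/-- The space of theta functions of degree `N` and nome `p` with multiplier `K`: functions
holomorphic on `ℂ ∖ {0}` with `f (p z) = K z ^ (-N) f z` there. The value at `0` is
unconstrained. -/
def thetaSpace (p K : ℂ) (N : ℕ) : Submodule ℂ (ℂ → ℂ) where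
  carrier := {f | DifferentiableOn ℂ f {0}ᶜ ∧ ∀ z ≠ 0, f (p * z) = K * z ^ (-N : ℤ) * f z}
  zero_mem' := ⟨differentiableOn_const 0, by simp⟩
  add_mem' hf hg := ⟨hf.1.add hg.1, fun z hz ↦ by
    simp only [Pi.add_apply, hf.2 z hz, hg.2 z hz, mul_add]⟩
  smul_mem' l _ hf := ⟨hf.1.const_smul l, fun z hz ↦ by
    simp only [Pi.smul_apply, smul_eq_mul, hf.2 z hz]
    ring⟩

variable {p K : ℂ} {N : ℕ}

theorem differentiableOn_zpow_mul {f : ℂ → ℂ} (hf : DifferentiableOn ℂ f {0}ᶜ) (m : ℤ) :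
    DifferentiableOn ℂ (fun z ↦ z ^ m * f z) {0}ᶜ :=
  .mul (fun _ hz ↦ (differentiableAt_zpow.mpr (.inl hz)).differentiableWithinAt) hf

theorem circleIntegrable_zpow_mul {f : ℂ → ℂ} (hf : DifferentiableOn ℂ f {0}ᶜ) (m : ℤ) :
    CircleIntegrable (fun z ↦ z ^ m * f z) 0 1 :=
  ((differentiableOn_zpow_mul hf m).continuousOn.mono
    fun _ hz ↦ ne_of_mem_sphere hz one_ne_zero).circleIntegrable zero_le_one

theorem circleIntegral_zpow_mul_eq_of_mem_thetaSpace (hp : ‖p‖ < 1) (hp0 : p ≠ 0) {f : ℂ → ℂ}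
    (hf : f ∈ thetaSpace p K N) (m : ℤ) :
    (∮ z in C(0, 1), z ^ m * f z) =
      p ^ (m + 1) * K * ∮ z in C(0, 1), z ^ (m - N) * f z := by
  calc (∮ z in C(0, 1), z ^ m * f z)
      = ∮ z in C(0, ‖p‖), z ^ m * f z :=
      circleIntegral_eq_of_differentiableOn_compl (norm_pos_iff.mpr hp0) hp.le
        (differentiableOn_zpow_mul hf.1 m)
    _ = ∮ z in C(0, 1), p * ((p * z) ^ m * f (p * z)) := by
      simpa using (circleIntegral_comp_mul_left (fun z ↦ z ^ m * f z) p 0 1).symm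
    _ = ∮ z in C(0, 1), p ^ (m + 1) * K * (z ^ (m - N) * f z) := by
      refine circleIntegral.integral_congr zero_le_one fun z hz ↦ ?_
      have hz0 : z ≠ 0 := ne_of_mem_sphere hz one_ne_zero
      simp only [hf.2 z hz0, mul_zpow, zpow_add₀ hp0, zpow_sub₀ hz0, zpow_neg, zpow_one]
      ring
    _ = p ^ (m + 1) * K * ∮ z in C(0, 1), z ^ (m - N) * f z :=
      circleIntegral.integral_const_mul ..

theorem eqOn_zero_of_mem_thetaSpace (hp : ‖p‖ < 1) (hp0 : p ≠ 0) (hK : K ≠ 0) (hN : N ≠ 0)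
    {f : ℂ → ℂ} (hf : f ∈ thetaSpace p K N)
    (h : ∀ m : Fin N, (∮ z in C(0, 1), z ^ (m : ℤ) * f z) = 0) :
    EqOn f 0 {0}ᶜ := by
  have hperiodic : Function.Periodic (fun m : ℤ ↦ (∮ z in C(0, 1), z ^ m * f z) = 0) N := by
    intro m
    simp [circleIntegral_zpow_mul_eq_of_mem_thetaSpace hp hp0 hf (m + N), hK, zpow_ne_zero, hp0]
  refine eqOn_compl_zero_of_circleIntegral_zpow_mul_eq_zero hf.1 fun m ↦ ?_
  have hN' : (N : ℤ) ≠ 0 := Nat.cast_ne_zero.mpr hN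
  have hmod := h ⟨(m % N).toNat, by have := m.emod_lt_of_pos (b := N); lia⟩
  rw [Int.toNat_of_nonneg (m.emod_nonneg hN'), Int.emod_def, mul_comm] at hmod
  exact (hperiodic.sub_int_mul_eq (m / N)).mp hmod

/-- The Laurent coefficients of a theta function that determine all the others, up to the factor
`2 π i`: its `m`-th value is the coefficient of `z ^ (-m - 1)`. -/
noncomputable def thetaMoments (p K : ℂ) (N : ℕ) : thetaSpace p K N →ₗ[ℂ] Fin N → ℂ where
  toFun f m := ∮ z in C(0, 1), z ^ (m : ℤ) * f.1 z
  map_add' f g := by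
    ext m
    simp only [Submodule.coe_add, Pi.add_apply, mul_add]
    exact circleIntegral.integral_add (circleIntegrable_zpow_mul f.2.1 m)
      (circleIntegrable_zpow_mul g.2.1 m)
  map_smul' l f := by
    ext m
    simp only [Submodule.coe_smul, Pi.smul_apply, smul_eq_mul, mul_left_comm _ l,
      circleIntegral.integral_const_mul, RingHom.id_apply]

theorem exists_linear_relation_of_mem_thetaSpace {ι : Type*} [Fintype ι] (hp : ‖p‖ < 1)
    (hp0 : p ≠ 0) (hK : K ≠ 0) (hN : N ≠ 0) (hι : N < Fintype.card ι) {F : ι → ℂ → ℂ}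
    (hF : ∀ i, F i ∈ thetaSpace p K N) :
    ∃ l : ι → ℂ, l ≠ 0 ∧ ∀ z ≠ 0, ∑ i, l i * F i z = 0 := by
  have hdep : ¬ LinearIndependent ℂ fun i ↦ thetaMoments p K N ⟨F i, hF i⟩ := fun hind ↦ by
    simpa [hι.not_ge] using hind.fintype_card_le_finrank
  obtain ⟨l, hl, i, hi⟩ := Fintype.not_linearIndependent_iff.mp hdep
  simp only [← map_smul, ← map_sum] at hl
  have hzero := eqOn_zero_of_mem_thetaSpace hp hp0 hK hN (Subtype.prop _) (congrFun hl)
  exact ⟨l, fun h ↦ hi (congrFun h i), fun z hz ↦ by simpa using hzero hz⟩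

end ThetaSpace

section Theta

variable {p : ℂ}

theorem summable_norm_mul_pow (hp : ‖p‖ < 1) (z : ℂ) :
    Summable fun j : ℕ ↦ ‖-(z * p ^ j)‖ := by
  simpa using (summable_geometric_of_lt_one (norm_nonneg p) hp).mul_left ‖z‖

theorem multipliable_qPochhammerInf (hp : ‖p‖ < 1) (z : ℂ) :
    Multipliable fun j : ℕ ↦ 1 - z * p ^ j := by
  simpa [sub_eq_add_neg] using multipliable_one_add_of_summable (summable_norm_mul_pow hp z)

theorem qPochhammerInf_eq_mul (hp : ‖p‖ < 1) (z : ℂ) :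
    qPochhammerInf z p = (1 - z) * qPochhammerInf (z * p) p := by
  have hshift (j : ℕ) : 1 - z * p ^ (j + 1) = 1 - z * p * p ^ j := by ring
  have htail : Multipliable fun j : ℕ ↦ 1 - z * p ^ (j + 1) := by
    simpa only [hshift] using multipliable_qPochhammerInf hp (z * p)
  simpa only [qPochhammerInf, hshift, pow_zero, mul_one] using
    tprod_eq_zero_mul' (f := fun j : ℕ ↦ 1 - z * p ^ j) htail

theorem qPochhammerInf_eq_zero_iff (hp : ‖p‖ < 1) {z : ℂ} :
    qPochhammerInf z p = 0 ↔ ∃ j : ℕ, z * p ^ j = 1 := by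
  refine ⟨fun h ↦ ?_, fun ⟨j, hj⟩ ↦ tprod_of_exists_eq_zero ⟨j, by simp [hj]⟩⟩
  contrapose! h
  simpa [qPochhammerInf, sub_eq_add_neg] using tprod_one_add_ne_zero_of_summable
    (f := fun j : ℕ ↦ -(z * p ^ j))
    (fun j ↦ by simpa [← sub_eq_add_neg, sub_eq_zero] using (h j).symm)
    (summable_norm_mul_pow hp z)

theorem differentiable_qPochhammerInf (hp : ‖p‖ < 1) :
    Differentiable ℂ fun z ↦ qPochhammerInf z p := by
  intro z
  have hbound : ∀ j : ℕ, ∀ w ∈ Metric.ball z 1, ‖-(w * p ^ j)‖ ≤ (‖z‖ + 1) * ‖p‖ ^ j := by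
    intro j w hw
    rw [norm_neg, norm_mul, norm_pow]
    gcongr
    linarith [norm_sub_norm_le w z, mem_ball_iff_norm.mp hw]
  have hprod := Summable.hasProdLocallyUniformlyOn_nat_one_add Metric.isOpen_ball
    ((summable_geometric_of_lt_one (norm_nonneg p) hp).mul_left (‖z‖ + 1))
    (.of_forall hbound) fun j ↦ by fun_prop
  have hdiff := hprod.tendstoLocallyUniformlyOn_finsetRange.differentiableOn
    (.of_forall fun n ↦ by fun_prop) Metric.isOpen_ball
  simpa [qPochhammerInf, sub_eq_add_neg] using
    hdiff.differentiableAt (Metric.ball_mem_nhds z one_pos)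

theorem theta_eq_qPochhammerInf_mul (hp : ‖p‖ < 1) (z : ℂ) :
    theta z p = qPochhammerInf z p * qPochhammerInf (z⁻¹ * p) p := by
  rw [qPochhammerInf, qPochhammerInf, ← (multipliable_qPochhammerInf hp z).tprod_mul
    (multipliable_qPochhammerInf hp _), theta]
  congr! 3 with j
  ring

theorem theta_zero_right (z : ℂ) : theta z 0 = 1 - z := by
  rw [theta, tprod_eq_mulSingle 0 fun j hj ↦ by simp [hj]]
  simp

theorem theta_inv (hp : ‖p‖ < 1) {z : ℂ} (hz : z ≠ 0) :
    theta z⁻¹ p = -z⁻¹ * theta z p := by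
  rw [theta_eq_qPochhammerInf_mul hp, theta_eq_qPochhammerInf_mul hp,
    qPochhammerInf_eq_mul hp z⁻¹, qPochhammerInf_eq_mul hp z, inv_inv]
  field

theorem theta_mul_left (hp : ‖p‖ < 1) (hp0 : p ≠ 0) {z : ℂ} (hz : z ≠ 0) :
    theta (p * z) p = -z⁻¹ * theta z p := by
  rw [theta_eq_qPochhammerInf_mul hp, theta_eq_qPochhammerInf_mul hp,
    show (p * z)⁻¹ * p = z⁻¹ by field, qPochhammerInf_eq_mul hp z⁻¹,
    qPochhammerInf_eq_mul hp z, mul_comm p z]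
  field

theorem theta_eq_zero_iff (hp : ‖p‖ < 1) {z : ℂ} (hz : z ≠ 0) :
    theta z p = 0 ↔ ∃ m : ℤ, z = p ^ m := by
  have hleft (j : ℕ) : z * p ^ j = 1 ↔ z = p ^ (-j : ℤ) := by
    rw [zpow_neg, zpow_natCast]
    refine ⟨eq_inv_of_mul_eq_one_left, fun hj ↦ ?_⟩
    rw [hj, inv_mul_cancel₀ fun h ↦ hz (by rw [hj, h, inv_zero])]
  have hright (j : ℕ) : z⁻¹ * p * p ^ j = 1 ↔ z = p ^ (j + 1 : ℤ) := by
    rw [mul_assoc, ← pow_succ', inv_mul_eq_one₀ hz]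
    norm_cast
  simp only [theta_eq_qPochhammerInf_mul hp, mul_eq_zero, qPochhammerInf_eq_zero_iff hp, hleft,
    hright]
  constructor
  · rintro (⟨j, hj⟩ | ⟨j, hj⟩)
    exacts [⟨_, hj⟩, ⟨_, hj⟩]
  · rintro ⟨m, hm⟩
    obtain ⟨j, rfl⟩ | ⟨j, rfl⟩ : (∃ j : ℕ, m = -j) ∨ ∃ j : ℕ, m = j + 1 := by
      rcases le_or_gt m 0 with hm | hm
      exacts [.inl ⟨(-m).toNat, by lia⟩, .inr ⟨(m - 1).toNat, by lia⟩]
    exacts [.inl ⟨j, hm⟩, .inr ⟨j, hm⟩]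

theorem theta_one (hp : ‖p‖ < 1) : theta 1 p = 0 :=
  (theta_eq_zero_iff hp one_ne_zero).mpr ⟨0, (zpow_zero p).symm⟩

theorem theta_div_eq_zero (hp : ‖p‖ < 1) {x y : ℂ} (hx0 : x ≠ 0) (hy0 : y ≠ 0)
    (hx : theta x p = 0) (hy : theta y p = 0) : theta (x / y) p = 0 := by
  rcases eq_or_ne p 0 with rfl | hp0
  · simp only [theta_zero_right, sub_eq_zero] at hx hy ⊢
    rw [← hx, ← hy, div_one]
  · obtain ⟨m, rfl⟩ := (theta_eq_zero_iff hp hx0).mp hx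
    obtain ⟨l, rfl⟩ := (theta_eq_zero_iff hp hy0).mp hy
    exact (theta_eq_zero_iff hp (div_ne_zero hx0 hy0)).mpr ⟨m - l, (zpow_sub₀ hp0 m l).symm⟩

theorem differentiableAt_theta (hp : ‖p‖ < 1) {z : ℂ} (hz : z ≠ 0) :
    DifferentiableAt ℂ (fun z ↦ theta z p) z := by
  have hdiff := differentiable_qPochhammerInf hp
  simp only [theta_eq_qPochhammerInf_mul hp]
  exact (hdiff z).mul ((hdiff _).comp z ((differentiableAt_inv hz).mul_const p))

end Theta

section ThetaBracket

/-- The degree-two theta function `x⁻¹ θ(x / y) θ(x y / c)` of `x` vanishing at `y` and `c / y`;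
the factor `x⁻¹` makes it antisymmetric in `x` and `y`. -/
noncomputable def thetaBracket (p c x y : ℂ) : ℂ :=
  x⁻¹ * (theta (x / y) p * theta (x * y / c) p)

variable {p c : ℂ}

theorem thetaBracket_self (hp : ‖p‖ < 1) {x : ℂ} (hx : x ≠ 0) : thetaBracket p c x x = 0 := by
  simp [thetaBracket, div_self hx, theta_one hp]

theorem thetaBracket_swap (hp : ‖p‖ < 1) {x y : ℂ} (hx : x ≠ 0) (hy : y ≠ 0) :
    thetaBracket p c y x = -thetaBracket p c x y := by
  rw [thetaBracket, thetaBracket, ← inv_div x y, theta_inv hp (div_ne_zero hx hy), mul_comm y x]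
  field

theorem thetaBracket_mem_thetaSpace (hp : ‖p‖ < 1) (hp0 : p ≠ 0) (hc : c ≠ 0) {y : ℂ}
    (hy : y ≠ 0) : (thetaBracket p c · y) ∈ thetaSpace p (c / p) 2 := by
  refine ⟨fun x hx ↦ DifferentiableAt.differentiableWithinAt ?_, fun x hx ↦ ?_⟩
  · have hx0 : x ≠ 0 := hx
    have hdiv := (differentiableAt_theta hp (div_ne_zero hx0 hy)).comp x
      (differentiableAt_id.div_const y)
    have hmul := (differentiableAt_theta hp (div_ne_zero (mul_ne_zero hx0 hy) hc)).comp x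
      ((differentiableAt_id.mul_const y).div_const c)
    exact (differentiableAt_inv hx0).mul (hdiv.mul hmul)
  · simp only [thetaBracket]
    rw [mul_div_assoc p, theta_mul_left hp hp0 (div_ne_zero hx hy),
      mul_assoc p, mul_div_assoc p,
      theta_mul_left hp hp0 (div_ne_zero (mul_ne_zero hx hy) hc), Nat.cast_ofNat, zpow_neg,
      zpow_ofNat]
    field

theorem det_fin_four_of_antisymm {R : Type*} [CommRing R] {A : Matrix (Fin 4) (Fin 4) R}
    (hdiag : ∀ i, A i i = 0) (hswap : ∀ i j, A j i = -A i j) :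
    A.det = (A 0 1 * A 2 3 - A 0 2 * A 1 3 + A 0 3 * A 1 2) ^ 2 := by
  simp [Matrix.det_succ_row_zero, Fin.sum_univ_succ, Fin.succAbove, hdiag, hswap 0 1, hswap 0 2,
    hswap 0 3, hswap 1 2, hswap 1 3, hswap 2 3]
  ring

-- Four members of a two-dimensional space are linearly dependent, so the antisymmetric matrix of
-- brackets is singular and its Pfaffian, a square root of the determinant, vanishes.
theorem thetaBracket_three_term (hp : ‖p‖ < 1) (hc : c ≠ 0) {w x y z : ℂ} (hw : w ≠ 0)
    (hx : x ≠ 0) (hy : y ≠ 0) (hz : z ≠ 0) :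
    thetaBracket p c w x * thetaBracket p c y z - thetaBracket p c w y * thetaBracket p c x z
      + thetaBracket p c w z * thetaBracket p c x y = 0 := by
  rcases eq_or_ne p 0 with rfl | hp0
  · simp only [thetaBracket, theta_zero_right]
    field
  let v : Fin 4 → ℂ := ![w, x, y, z]
  have hv (i : Fin 4) : v i ≠ 0 := by fin_cases i <;> assumption
  let A : Matrix (Fin 4) (Fin 4) ℂ := .of fun i j ↦ thetaBracket p c (v i) (v j)
  obtain ⟨l, hl, hrel⟩ := exists_linear_relation_of_mem_thetaSpace hp hp0 (div_ne_zero hc hp0)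
    two_ne_zero (by simp) fun j ↦ thetaBracket_mem_thetaSpace hp hp0 hc (hv j)
  have hdet : A.det = 0 := Matrix.exists_mulVec_eq_zero_iff.mp ⟨l, hl, funext fun i ↦ by
    simpa [Matrix.mulVec, dotProduct, A, mul_comm] using hrel (v i) (hv i)⟩
  have hpfaffian := det_fin_four_of_antisymm (A := A) (fun i ↦ thetaBracket_self hp (hv i))
    fun i j ↦ thetaBracket_swap hp (hv i) (hv j)
  exact (pow_eq_zero_iff two_ne_zero).mp (hpfaffian.symm.trans hdet)

theorem sum_mul_thetaBracket_eq_zero {ι : Type*} {s : Finset ι} {A x : ι → ℂ} (hp : ‖p‖ < 1)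
    (hc : c ≠ 0) (hx : ∀ k ∈ s, x k ≠ 0) {u v z : ℂ} (hu : u ≠ 0) (hv : v ≠ 0) (hz : z ≠ 0)
    (huv : thetaBracket p c u v ≠ 0) (hsumu : ∑ k ∈ s, A k * thetaBracket p c (x k) u = 0)
    (hsumv : ∑ k ∈ s, A k * thetaBracket p c (x k) v = 0) :
    ∑ k ∈ s, A k * thetaBracket p c (x k) z = 0 := by
  refine (mul_eq_zero.mp ?_).resolve_left huv
  calc thetaBracket p c u v * ∑ k ∈ s, A k * thetaBracket p c (x k) z
      = thetaBracket p c u z * ∑ k ∈ s, A k * thetaBracket p c (x k) v -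
          thetaBracket p c v z * ∑ k ∈ s, A k * thetaBracket p c (x k) u := by
        simp only [Finset.mul_sum, ← Finset.sum_sub_distrib]
        refine Finset.sum_congr rfl fun k hk ↦ ?_
        linear_combination A k * thetaBracket_three_term hp hc (hx k hk) hu hv hz
    _ = 0 := by rw [hsumu, hsumv, mul_zero, mul_zero, sub_zero]

theorem exists_thetaBracket_ne_zero {ι : Type*} {s : Finset ι} {a : ι → ℂ} (hp : ‖p‖ < 1)
    (hc : c ≠ 0) (hs : 2 < s.card) (ha : ∀ k ∈ s, a k ≠ 0)
    (hθ : (s : Set ι).Pairwise fun j k ↦ theta (a j / a k) p ≠ 0) :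
    ∃ i ∈ s, ∃ j ∈ s, thetaBracket p c (a i) (a j) ≠ 0 := by
  obtain ⟨i, hi, j, hj, k, hk, hij, hik, hjk⟩ := Finset.two_lt_card.mp hs
  by_contra! hzero
  have hmul {l : ι} (hl : l ∈ s) (hil : i ≠ l) : theta (a i * a l / c) p = 0 := by
    simpa [thetaBracket, ha i hi, hθ hi hl hil] using hzero i hi l hl
  have hquot := theta_div_eq_zero hp (div_ne_zero (mul_ne_zero (ha i hi) (ha j hj)) hc)
    (div_ne_zero (mul_ne_zero (ha i hi) (ha k hk)) hc) (hmul hj hij) (hmul hk hik)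
  rw [div_div_div_cancel_right₀ hc, mul_div_mul_left _ _ (ha i hi)] at hquot
  exact hθ hj hk hjk hquot

end ThetaBracket

section PartialFraction

variable {ι : Type*} [DecidableEq ι] {p : ℂ} {a : ι → ℂ} {s : Finset ι}

/-- The `k`-th summand `∏_{b ∈ B} θ(a k / b) / ∏_{j ∈ s, j ≠ k} θ(a k / a j)` of the partial
fraction sum. The zeros form a multiset because the induction replaces them one at a time. -/
noncomputable def partialFractionTerm (p : ℂ) (a : ι → ℂ) (s : Finset ι) (B : Multiset ℂ)
    (k : ι) : ℂ :=
  (B.map fun b ↦ theta (a k / b) p).prod / ∏ j ∈ s.erase k, theta (a k / a j) p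

theorem partialFractionTerm_cons (b : ℂ) (B : Multiset ℂ) (k : ι) :
    partialFractionTerm p a s (b ::ₘ B) k =
      theta (a k / b) p * partialFractionTerm p a s B k := by
  rw [partialFractionTerm, Multiset.map_cons, Multiset.prod_cons, mul_div_assoc,
    partialFractionTerm]

theorem partialFractionTerm_erase {B : Multiset ℂ} {i k : ι} (hi : i ∈ s) (hki : k ≠ i)
    (hθ : theta (a k / a i) p ≠ 0) :
    partialFractionTerm p a (s.erase i) B k =
      theta (a k / a i) p * partialFractionTerm p a s B k := by
  rw [partialFractionTerm, partialFractionTerm, Finset.erase_right_comm,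
    ← Finset.mul_prod_erase (s.erase k) _ (Finset.mem_erase.mpr ⟨hki.symm, hi⟩)]
  field

theorem partialFractionTerm_cons_cons {c z : ℂ} (B : Multiset ℂ) {k : ι} (hk : a k ≠ 0) :
    partialFractionTerm p a s (z ::ₘ (c / z) ::ₘ B) k =
      a k * partialFractionTerm p a s B k * thetaBracket p c (a k) z := by
  rw [partialFractionTerm_cons, partialFractionTerm_cons, thetaBracket, div_div_eq_mul_div]
  field

theorem sum_partialFractionTerm_cons_self (hp : ‖p‖ < 1) (B : Multiset ℂ) {i : ι} (hi : i ∈ s)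
    (hai : a i ≠ 0) (hθ : (s : Set ι).Pairwise fun j k ↦ theta (a j / a k) p ≠ 0) :
    ∑ k ∈ s, partialFractionTerm p a s (a i ::ₘ B) k =
      ∑ k ∈ s.erase i, partialFractionTerm p a (s.erase i) B k := by
  have hterm : partialFractionTerm p a s (a i ::ₘ B) i = 0 := by
    rw [partialFractionTerm_cons, div_self hai, theta_one hp, zero_mul]
  rw [← Finset.sum_erase s hterm]
  refine Finset.sum_congr rfl fun k hk ↦ ?_
  obtain ⟨hki, hks⟩ := Finset.mem_erase.mp hk
  rw [partialFractionTerm_cons, partialFractionTerm_erase hi hki (hθ hks hi hki)]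

theorem sum_partialFractionTerm_pair (hp : ‖p‖ < 1) {i j : ι} (hij : i ≠ j) (hai : a i ≠ 0)
    (haj : a j ≠ 0) {b b' : ℂ} (hbal : a i * a j = b * b')
    (hθ : theta (a i / a j) p ≠ 0) :
    ∑ k ∈ {i, j}, partialFractionTerm p a {i, j} {b, b'} k = 0 := by
  obtain ⟨hb, hb'⟩ := mul_ne_zero_iff.mp (hbal ▸ mul_ne_zero hai haj)
  have hi : a i / b' = (a j / b)⁻¹ := by
    rw [inv_div, div_eq_div_iff hb' haj, hbal, mul_comm]
  have hj : a j / b' = (a i / b)⁻¹ := by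
    rw [inv_div, div_eq_div_iff hb' hai, mul_comm, hbal, mul_comm]
  have hji : a j / a i = (a i / a j)⁻¹ := (inv_div ..).symm
  rw [Finset.sum_pair hij]
  simp only [partialFractionTerm, Multiset.insert_eq_cons, Multiset.map_cons,
    Multiset.map_singleton, Multiset.prod_cons, Multiset.prod_singleton,
    Finset.erase_insert_of_ne hij, Finset.erase_insert (Finset.notMem_singleton.mpr hij),
    Finset.erase_singleton, insert_empty_eq, Finset.prod_singleton, hi, hj, hji]
  rw [theta_inv hp (div_ne_zero haj hb), theta_inv hp (div_ne_zero hai hb),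
    theta_inv hp (div_ne_zero hai haj)]
  field

-- As a function of `z` the left-hand side is a combination of brackets, and at the nodes `z = a i`
-- it collapses to a sum with one node fewer.
theorem sum_partialFractionTerm_eq_zero_of_erase (hp : ‖p‖ < 1) (hs : 2 < s.card)
    (ha : ∀ k ∈ s, a k ≠ 0) (hθ : (s : Set ι).Pairwise fun j k ↦ theta (a j / a k) p ≠ 0)
    {c : ℂ} (hc : c ≠ 0) {B : Multiset ℂ}
    (herase : ∀ i ∈ s, ∑ k ∈ s.erase i, partialFractionTerm p a (s.erase i) ((c / a i) ::ₘ B) k = 0)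
    {z : ℂ} (hz : z ≠ 0) :
    ∑ k ∈ s, partialFractionTerm p a s (z ::ₘ (c / z) ::ₘ B) k = 0 := by
  have hbracket (z : ℂ) : ∑ k ∈ s, partialFractionTerm p a s (z ::ₘ (c / z) ::ₘ B) k =
      ∑ k ∈ s, a k * partialFractionTerm p a s B k * thetaBracket p c (a k) z :=
    Finset.sum_congr rfl fun k hk ↦ partialFractionTerm_cons_cons B (ha k hk)
  have hnode {i : ι} (hi : i ∈ s) :
      ∑ k ∈ s, a k * partialFractionTerm p a s B k * thetaBracket p c (a k) (a i) = 0 := by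
    rw [← hbracket, sum_partialFractionTerm_cons_self hp _ hi (ha i hi) hθ, herase i hi]
  obtain ⟨i, hi, j, hj, hij⟩ := exists_thetaBracket_ne_zero hp hc hs ha hθ
  rw [hbracket]
  exact sum_mul_thetaBracket_eq_zero hp hc ha (ha i hi) (ha j hj) hz hij (hnode hi) (hnode hj)

theorem sum_partialFractionTerm_eq_zero (hp : ‖p‖ < 1) (ha : ∀ k ∈ s, a k ≠ 0)
    (hθ : (s : Set ι).Pairwise fun j k ↦ theta (a j / a k) p ≠ 0) {B : Multiset ℂ}
    (hcard : B.card = s.card) (hbal : ∏ k ∈ s, a k = B.prod) :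
    ∑ k ∈ s, partialFractionTerm p a s B k = 0 := by
  induction s using Finset.strongInduction generalizing B with
  | H s ih =>
  rcases hs : s.card with _ | _ | _ | m
  · rw [Finset.card_eq_zero.mp hs, Finset.sum_empty]
  · obtain ⟨i, rfl⟩ := Finset.card_eq_one.mp hs
    obtain ⟨b, rfl⟩ := Multiset.card_eq_one.mp (hcard.trans hs)
    obtain rfl : a i = b := by simpa using hbal
    have hi := Finset.mem_singleton_self i
    rw [← Multiset.cons_zero, sum_partialFractionTerm_cons_self hp 0 hi (ha i hi) hθ,
      Finset.erase_singleton, Finset.sum_empty]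
  · obtain ⟨i, j, hij, rfl⟩ := Finset.card_eq_two.mp hs
    obtain ⟨b, b', rfl⟩ := Multiset.card_eq_two.mp (hcard.trans hs)
    exact sum_partialFractionTerm_pair hp hij (ha i (by simp)) (ha j (by simp))
      (by simpa [Finset.prod_pair hij] using hbal) (hθ (by simp) (by simp) hij)
  · obtain ⟨b, B', rfl, hB'⟩ := Multiset.card_eq_succ_iff.mp (hcard.trans hs)
    obtain ⟨b', B, rfl, hB⟩ := Multiset.card_eq_succ_iff.mp hB'
    simp only [Multiset.prod_cons, ← mul_assoc] at hbal
    have hc : b * b' ≠ 0 := left_ne_zero_of_mul (hbal ▸ Finset.prod_ne_zero_iff.mpr ha)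
    have hb : b ≠ 0 := left_ne_zero_of_mul hc
    rw [← mul_div_cancel_left₀ b' hb]
    refine sum_partialFractionTerm_eq_zero_of_erase hp (by lia) ha hθ hc (fun i hi ↦ ?_) hb
    refine ih (s.erase i) (Finset.erase_ssubset hi) (fun k hk ↦ ha k (Finset.mem_of_mem_erase hk))
      (hθ.mono (mod_cast Finset.erase_subset i s)) ?_ ?_
    · rw [Multiset.card_cons, hB, Finset.card_erase_of_mem hi, hs, Nat.add_sub_cancel]
    · rw [Multiset.prod_cons, div_mul_eq_mul_div, ← hbal, ← Finset.mul_prod_erase s a hi,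
        mul_div_cancel_left₀ _ (ha i hi)]

end PartialFraction

theorem theta_partial_fraction_sum (p : ℂ) (hp : ‖p‖ < 1) (n : ℕ)
    (a b : Fin n → ℂ) (ha : ∀ j, a j ≠ 0) (hb : ∀ j, b j ≠ 0)
    (hbal : ∏ k, a k = ∏ k, b k)
    (hdist : ∀ j k, j ≠ k → ∀ m : ℤ, a j / a k ≠ p ^ m) :
    ∑ k, (∏ j, theta (a k / b j) p) / ∏ j ∈ Finset.univ.erase k, theta (a k / a j) p
      = 0 := by
  have hθ : ((Finset.univ : Finset (Fin n)) : Set (Fin n)).Pairwise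
      fun j k ↦ theta (a j / a k) p ≠ 0 := fun j _ k _ hjk ↦ by
    simpa [theta_eq_zero_iff hp (div_ne_zero (ha j) (ha k))] using hdist j k hjk
  have hsum := sum_partialFractionTerm_eq_zero hp (fun j _ ↦ ha j) hθ
    (B := Finset.univ.val.map b) (by simp) hbal
  simpa only [partialFractionTerm, Multiset.map_map, Function.comp_def, Finset.prod_map_val]
    using hsum
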